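/- Let U_1, …, U_n be independent uniform-[0,1] random variables, let G_n denote their empirical distribution function, G_n(t) := n^{−1} #{i ≤ n : U_i ≤ t}, and for a ∈ (0,1] set Γ_n(a) := sup_{t ∈ [a,1]} G_n(t)/t. Then for every α > 0, P( Γ_n(U_{1:n}) ≥ n^{α} ) → 0 as n → ∞, where U_{1:n} := min{U_1, …, U_n}. -/

import Mathlib

open MeasureTheory ProbabilityTheory Filter Set

/-- The `i`-th order statistic (indexed `i = 1, …, n`) of the values
`X 1 ω, …, X n ω`. -/
noncomputable def orderStat {Ω : Type*} (X : ℕ → Ω → ℝ) (n i : ℕ) (ω : Ω) : ℝ :=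
  (((Finset.Icc 1 n).val.map (fun j => X j ω)).sort (· ≤ ·)).getD (i - 1) 0

/-- The empirical distribution function `G_n(t) = n⁻¹ #{i ≤ n : U_i ≤ t}`
of `U 1, …, U n`. -/
noncomputable def empDF {Ω : Type*} (U : ℕ → Ω → ℝ) (n : ℕ) (t : ℝ) (ω : Ω) : ℝ :=
  ((Finset.Icc 1 n).filter (fun i => U i ω ≤ t)).card / (n : ℝ)

/-- `Γ_n(a) = sup_{t ∈ [a,1]} G_n(t)/t`. -/
noncomputable def empRatioSup {Ω : Type*} (U : ℕ → Ω → ℝ) (n : ℕ) (a : ℝ) (ω : Ω) : ℝ :=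
  sSup ((fun t => empDF U n t ω / t) '' Icc a 1)

/-!
Cut `(0, 1]` by the geometric grid `q ^ k` with `q = n ^ (-α/3)`. By monotonicity of `G_n`, at a
cost of a factor `1 / q` the ratio `G_n(t) / t` is controlled at the grid points. There
`E G_n(t) ≤ t`, so Markov's inequality bounds the probability that the ratio exceeds
`n ^ (2α/3)` on a given grid interval by `n ^ (-α/3)`. Since `U_{1:n} ≤ q ^ K` has probability at
most `n q ^ K`, a number `K` of grid points depending only on `α` suffices, and a union bound over
them concludes.
-/

section EventCount

variable {Ω ι : Type*} [MeasurableSpace Ω] {μ : Measure Ω}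

lemma mul_measure_le_card_filter_mem_le_sum (I : Finset ι) (s : ι → Set Ω)
    [∀ ω, DecidablePred fun i => ω ∈ s i] (c : ENNReal) :
    c * μ {ω | c ≤ (I.filter (fun i => ω ∈ s i)).card} ≤ ∑ i ∈ I, μ (s i) := by
  let count : Ω → ENNReal := fun ω => ∑ i ∈ I, (toMeasurable μ (s i)).indicator 1 ω
  have hmeas (i : ι) : Measurable ((toMeasurable μ (s i)).indicator (1 : Ω → ENNReal)) :=
    measurable_one.indicator (measurableSet_toMeasurable μ (s i))
  have card_le_count (ω : Ω) : ((I.filter (fun i => ω ∈ s i)).card : ENNReal) ≤ count ω := by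
    rw [Finset.natCast_card_filter]
    refine Finset.sum_le_sum fun i _ => ?_
    split_ifs with hi
    · simp [subset_toMeasurable μ (s i) hi]
    · exact zero_le
  calc c * μ {ω | c ≤ (I.filter (fun i => ω ∈ s i)).card}
      ≤ c * μ {ω | c ≤ count ω} := by
        gcongr with ω
        exact card_le_count ω
    _ ≤ ∫⁻ ω, count ω ∂μ :=
        mul_meas_ge_le_lintegral (Finset.measurable_sum I fun i _ => hmeas i) c
    _ = ∑ i ∈ I, μ (s i) := by
        rw [lintegral_finsetSum I fun i _ => hmeas i]
        simp only [lintegral_indicator_one (measurableSet_toMeasurable _ _),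
          measure_toMeasurable]

end EventCount

section Deterministic

variable {Ω : Type*} (U : ℕ → Ω → ℝ) (n : ℕ) (ω : Ω)

lemma exists_orderStat_eq {i : ℕ} (hi : i ∈ Finset.Icc 1 n) :
    ∃ j ∈ Finset.Icc 1 n, orderStat U n i ω = U j ω := by
  obtain ⟨hi1, hin⟩ := Finset.mem_Icc.mp hi
  set l := ((Finset.Icc 1 n).val.map (fun j => U j ω)).sort (· ≤ ·) with hl
  have hlt : i - 1 < l.length := by
    rw [hl, Multiset.length_sort, Multiset.card_map, Finset.card_val, Nat.card_Icc]
    omega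
  have hmem : orderStat U n i ω ∈ l := by
    rw [orderStat, ← hl, List.getD_eq_getElem _ _ hlt]
    exact List.getElem_mem hlt
  rw [hl, Multiset.mem_sort, Multiset.mem_map] at hmem
  obtain ⟨j, hj, hjeq⟩ := hmem
  exact ⟨j, hj, hjeq.symm⟩

lemma empDF_mono : Monotone fun t => empDF U n t ω := by
  intro s t hst
  dsimp only [empDF]
  gcongr

variable {U n ω}

lemma empRatioSup_le_of_geometric_grid {q a c : ℝ} {K : ℕ} (hq : 0 < q) (hq1 : q < 1)
    (hc : 0 ≤ c) (ha : q ^ K < a)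
    (hgrid : ∀ k ∈ Finset.range K, empDF U n (q ^ k) ω ≤ c * q ^ (k + 1)) :
    empRatioSup U n a ω ≤ c := by
  refine Real.sSup_le ?_ hc
  rintro _ ⟨t, ⟨hat, ht1⟩, rfl⟩
  have hKt : q ^ K < t := ha.trans_le hat
  have ht0 : 0 < t := (pow_pos hq K).trans hKt
  obtain ⟨k, hkt, htk⟩ := exists_nat_pow_near_of_lt_one ht0 ht1 hq hq1
  have hkK : k < K := (pow_lt_pow_iff_right_of_lt_one₀ hq hq1).mp (hKt.trans_le htk)
  rw [div_le_iff₀ ht0]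
  calc empDF U n t ω ≤ empDF U n (q ^ k) ω := empDF_mono U n ω htk
    _ ≤ c * q ^ (k + 1) := hgrid k (Finset.mem_range.mpr hkK)
    _ ≤ c * t := by gcongr

end Deterministic

section Superuniform

variable {Ω : Type*} [MeasurableSpace Ω] {P : Measure Ω}

/-- `X` is super-uniform under `P`: its law stochastically dominates the uniform law on `[0,1]`.
It is stated through the lower tail, the form in which Markov's inequality and union bounds
consume it. For `t ≤ 0` the bound says `P(X ≤ t) = 0`; if `X` is not measurable, `P` acts as an
outer measure. -/
def IsSuperuniform (X : Ω → ℝ) (P : Measure Ω) : Prop :=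
  ∀ t : ℝ, P {ω | X ω ≤ t} ≤ ENNReal.ofReal t

lemma isSuperuniform_of_hasLaw {X : Ω → ℝ} (hX : HasLaw X (volume.restrict (Icc (0 : ℝ) 1)) P) :
    IsSuperuniform X P := by
  intro t
  calc P {ω | X ω ≤ t} = P.map X (Iic t) :=
        (Measure.map_apply_of_aemeasurable hX.aemeasurable measurableSet_Iic).symm
    _ = volume (Iic t ∩ Icc 0 1) := by rw [hX.map_eq, Measure.restrict_apply measurableSet_Iic]
    _ ≤ volume (Icc 0 t) := measure_mono fun x hx => ⟨hx.2.1, hx.1⟩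
    _ = ENNReal.ofReal t := by rw [Real.volume_Icc, sub_zero]

variable {U : ℕ → Ω → ℝ} {n : ℕ}

lemma measure_le_empDF_le (hU : ∀ i, IsSuperuniform (U i) P) (hn : n ≠ 0) (t : ℝ)
    {c : ℝ} (hc : 0 < c) :
    P {ω | c ≤ empDF U n t ω} ≤ ENNReal.ofReal (t / c) := by
  have hn0 : (0 : ℝ) < n := by positivity
  have hcn : 0 < c * n := by positivity
  have hevent : {ω | c ≤ empDF U n t ω} = {ω | ENNReal.ofReal (c * n) ≤
      ((Finset.Icc 1 n).filter (fun i => ω ∈ {ω | U i ω ≤ t})).card} := by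
    ext ω
    simp only [mem_ofPred_eq, empDF, le_div_iff₀ hn0, ← ENNReal.ofReal_natCast,
      ENNReal.ofReal_le_ofReal_iff (Nat.cast_nonneg _)]
  have hmarkov : ENNReal.ofReal (c * n) * P {ω | c ≤ empDF U n t ω} ≤ n * ENNReal.ofReal t := by
    rw [hevent]
    refine (mul_measure_le_card_filter_mem_le_sum _ _ _).trans ?_
    simpa using Finset.sum_le_card_nsmul (Finset.Icc 1 n) _ _ fun i _ => hU i t
  calc P {ω | c ≤ empDF U n t ω} ≤ n * ENNReal.ofReal t / ENNReal.ofReal (c * n) := by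
        rw [ENNReal.le_div_iff_mul_le (by simp [hcn]) (by simp), mul_comm]
        exact hmarkov
    _ = ENNReal.ofReal (t / c) := by
        rw [← ENNReal.ofReal_natCast, ← ENNReal.ofReal_mul hn0.le, ← ENNReal.ofReal_div_of_pos hcn,
          mul_comm c, mul_div_mul_left _ _ hn0.ne']

lemma measure_orderStat_le_le (hU : ∀ i, IsSuperuniform (U i) P) {i : ℕ}
    (hi : i ∈ Finset.Icc 1 n) (t : ℝ) :
    P {ω | orderStat U n i ω ≤ t} ≤ n * ENNReal.ofReal t := by
  have hsub : {ω | orderStat U n i ω ≤ t} ⊆ ⋃ j ∈ Finset.Icc 1 n, {ω | U j ω ≤ t} := by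
    intro ω hω
    obtain ⟨j, hj, hjeq⟩ := exists_orderStat_eq U n ω hi
    exact mem_biUnion hj (hjeq.ge.trans hω)
  calc P {ω | orderStat U n i ω ≤ t} ≤ ∑ j ∈ Finset.Icc 1 n, P {ω | U j ω ≤ t} :=
        (measure_mono hsub).trans (measure_biUnion_finset_le _ _)
    _ ≤ n * ENNReal.ofReal t := by
        simpa using Finset.sum_le_card_nsmul (Finset.Icc 1 n) _ _ fun j _ => hU j t

lemma measure_lt_empRatioSup_le (hU : ∀ i, IsSuperuniform (U i) P) (hn : n ≠ 0)
    (a : Ω → ℝ) {q c : ℝ} (hq : 0 < q) (hq1 : q < 1) (hc : 0 < c) (K : ℕ) :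
    P {ω | c < empRatioSup U n (a ω) ω} ≤
      K * ENNReal.ofReal (1 / (c * q)) + P {ω | a ω ≤ q ^ K} := by
  have hsub : {ω | c < empRatioSup U n (a ω) ω} ⊆
      (⋃ k ∈ Finset.range K, {ω | c * q ^ (k + 1) ≤ empDF U n (q ^ k) ω}) ∪
        {ω | a ω ≤ q ^ K} := by
    intro ω hω
    by_contra hout
    simp only [mem_union, mem_iUnion, mem_ofPred_eq, not_or, not_exists, not_le] at hout
    exact hω.not_ge (empRatioSup_le_of_geometric_grid hq hq1 hc.le hout.2
      fun k hk => (hout.1 k hk).le)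
  have hgrid (k : ℕ) :
      P {ω | c * q ^ (k + 1) ≤ empDF U n (q ^ k) ω} ≤ ENNReal.ofReal (1 / (c * q)) := by
    convert measure_le_empDF_le hU hn (q ^ k) (show 0 < c * q ^ (k + 1) by positivity) using 2
    rw [pow_succ']
    field_simp
  refine (measure_mono hsub).trans ((measure_union_le _ _).trans ?_)
  gcongr
  refine (measure_biUnion_finset_le _ _).trans ?_
  simpa using Finset.sum_le_card_nsmul (Finset.range K) _ _ fun k _ => hgrid k

lemma measure_rpow_le_empRatioSup_min_le (hU : ∀ i, IsSuperuniform (U i) P)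
    (hn : 2 ≤ n) {α : ℝ} (hα : 0 < α) {K : ℕ} (hK : 3 / α + 1 ≤ K) :
    P {ω | (n : ℝ) ^ α ≤ empRatioSup U n (orderStat U n 1 ω) ω} ≤
      ENNReal.ofReal ((K + 1) * (n : ℝ) ^ (-(α / 3))) := by
  have hn1 : (1 : ℝ) < n := by exact_mod_cast hn
  have hn0 : (0 : ℝ) < n := by positivity
  set q : ℝ := (n : ℝ) ^ (-(α / 3))
  set c : ℝ := (n : ℝ) ^ (2 * (α / 3))
  have hq1 : q < 1 := Real.rpow_lt_one_of_one_lt_of_neg hn1 (by linarith)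
  have hcα : c < (n : ℝ) ^ α := Real.rpow_lt_rpow_of_exponent_lt hn1 (by linarith)
  have hgrid : 1 / (c * q) = q := by
    rw [← Real.rpow_add hn0, one_div, ← Real.rpow_neg hn0.le]
    congr 1
    ring
  have hmin : n * q ^ K ≤ q := by
    have hexp : 1 + -(α / 3) * K ≤ -(α / 3) := by
      have := mul_le_mul_of_nonneg_left hK (show 0 ≤ α / 3 by positivity)
      field_simp at this
      linarith
    calc n * q ^ K = (n : ℝ) ^ (1 + -(α / 3) * K) := by
          rw [Real.rpow_add hn0, Real.rpow_one, Real.rpow_mul_natCast hn0.le]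
      _ ≤ q := Real.rpow_le_rpow_of_exponent_le hn1.le hexp
  calc P {ω | (n : ℝ) ^ α ≤ empRatioSup U n (orderStat U n 1 ω) ω}
      ≤ P {ω | c < empRatioSup U n (orderStat U n 1 ω) ω} :=
        measure_mono fun _ hω => hcα.trans_le hω
    _ ≤ K * ENNReal.ofReal (1 / (c * q)) + P {ω | orderStat U n 1 ω ≤ q ^ K} :=
        measure_lt_empRatioSup_le hU (by omega) _ (by positivity) hq1 (by positivity) K
    _ ≤ K * ENNReal.ofReal q + n * ENNReal.ofReal (q ^ K) := by
        rw [hgrid]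
        gcongr
        exact measure_orderStat_le_le hU (Finset.mem_Icc.mpr ⟨le_rfl, by omega⟩) _
    _ = ENNReal.ofReal (K * q + n * q ^ K) := by
        rw [ENNReal.ofReal_add (by positivity) (by positivity),
          ENNReal.ofReal_mul (Nat.cast_nonneg K), ENNReal.ofReal_mul hn0.le,
          ENNReal.ofReal_natCast, ENNReal.ofReal_natCast]
    _ ≤ ENNReal.ofReal ((K + 1) * q) := ENNReal.ofReal_le_ofReal (by linarith)

end Superuniform

/-- When `U_{1:n} > 1` the supremum `Γ_n(U_{1:n})` is over the empty set and has value `0`. -/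
theorem empRatioSup_at_min_tendsto_zero_general {Ω : Type*} [MeasurableSpace Ω] {P : Measure Ω}
    {U : ℕ → Ω → ℝ} (hU : ∀ i, IsSuperuniform (U i) P) {α : ℝ} (hα : 0 < α) :
    Tendsto (fun n : ℕ => P {ω | (n : ℝ) ^ α ≤ empRatioSup U n (orderStat U n 1 ω) ω})
      atTop (nhds 0) := by
  obtain ⟨K, hK⟩ := exists_nat_ge (3 / α + 1)
  have hrate : Tendsto (fun n : ℕ => ENNReal.ofReal ((K + 1) * (n : ℝ) ^ (-(α / 3))))
      atTop (nhds 0) := by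
    have hpow := (tendsto_rpow_neg_atTop (show 0 < α / 3 by positivity)).comp
      (tendsto_natCast_atTop_atTop (R := ℝ))
    simpa using ENNReal.tendsto_ofReal (hpow.const_mul ((K : ℝ) + 1))
  refine tendsto_of_tendsto_of_tendsto_of_le_of_le' tendsto_const_nhds hrate
    (Eventually.of_forall fun _ => zero_le) ?_
  filter_upwards [eventually_ge_atTop 2] with n hn
  exact measure_rpow_le_empRatioSup_min_le hU hn hα hK

/-- For iid uniform-[0,1] random variables, `P(Γ_n(U_{1:n}) ≥ n^α) → 0` for every
`α > 0`, where `U_{1:n} = min(U_1, …, U_n)`. -/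
theorem empRatioSup_at_min_tendsto_zero
    {Ω : Type*} [MeasurableSpace Ω] (P : Measure Ω) [IsProbabilityMeasure P]
    (U : ℕ → Ω → ℝ)
    (hUmeas : ∀ i, Measurable (U i))
    (hUindep : iIndepFun U P)
    (hUunif : ∀ i, Measure.map (U i) P = volume.restrict (Icc (0:ℝ) 1)) :
    ∀ α : ℝ, 0 < α →
      Tendsto (fun n : ℕ =>
        P {ω | (n:ℝ) ^ (α : ℝ) ≤ empRatioSup U n (orderStat U n 1 ω) ω})
        atTop (nhds 0) := by
  exact fun α hα => empRatioSup_at_min_tendsto_zero_general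
    (fun i => isSuperuniform_of_hasLaw ⟨(hUmeas i).aemeasurable, hUunif i⟩) hα
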